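/- Let M and B be unital C*-algebras with B ⊆ M a unital C*-subalgebra, E : M → B a positive conditional expectation, and F : B → ℂ a faithful state (F(b*b) = 0 implies b = 0). Assume τ = F∘E is a faithful trace on M (τ(xy) = τ(yx) for all x, y ∈ M, and τ(x*x) = 0 implies x = 0). Let X = X* ∈ M be a B-semicircular variable. Then the distribution of X with respect to τ is a semicircle law — i.e. there exists r ≥ 0 such that τ(X^k) = ∫ t^k dν_r(t) for all k ≥ 1, where ν_r is the semicircle law of variance r — if and only if E(X²) ∈ ℂ·1. -/

import Mathlib

open scoped Classical

noncomputable section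

namespace OVFree

variable {B M : Type*}

/-- `P` is a set partition of `{1, …, n}` (modelled on `Fin n`): its blocks are
nonempty and every point lies in exactly one block. -/
def IsPartition {n : ℕ} (P : Finset (Finset (Fin n))) : Prop :=
  (∀ t ∈ P, t.Nonempty) ∧ ∀ i : Fin n, ∃! t, t ∈ P ∧ i ∈ t

/-- A set partition is non-crossing if there are no `a < b < c < d` with `a, c` in one
block and `b, d` in a different block. -/
def IsNonCrossing {n : ℕ} (P : Finset (Finset (Fin n))) : Prop :=
  ∀ a b c d : Fin n, a < b → b < c → c < d →
    ∀ t ∈ P, ∀ u ∈ P, a ∈ t → c ∈ t → b ∈ u → d ∈ u → t = u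

/-- `NC n`: the (finite) set of non-crossing partitions of `{1, …, n}`. -/
def NC (n : ℕ) : Finset (Finset (Finset (Fin n))) :=
  Finset.univ.filter fun P => IsPartition P ∧ IsNonCrossing P

/-- `i` is the least element of its block of `P`. -/
def IsBlockMin {n : ℕ} (P : Finset (Finset (Fin n))) (i : Fin n) : Prop :=
  ∀ t ∈ P, i ∈ t → ∀ j ∈ t, i ≤ j

/-- `i` is the greatest element of its block of `P`. -/
def IsBlockMax {n : ℕ} (P : Finset (Finset (Fin n))) (i : Fin n) : Prop :=
  ∀ t ∈ P, i ∈ t → ∀ j ∈ t, j ≤ i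

section Brack

variable [Ring B] [Algebra ℂ B] [Ring M] [Algebra ℂ M]

/-- A multiplicative map `⟨⋯⟩ : ⋃ₙ Mⁿ → B` (tuples are encoded as lists): a sequence of
`ℂ`-multilinear maps which is `B`-balanced in the sense of Speicher.  Here `ι : B →ₐ[ℂ] M`
is the inclusion of `B` as a unital subalgebra of `M`. -/
structure MultiplicativeMap (ι : B →ₐ[ℂ] M) where
  toFun : List M → B
  map_add : ∀ (pre : List M) (x y : M) (post : List M),
    toFun (pre ++ (x + y) :: post) = toFun (pre ++ x :: post) + toFun (pre ++ y :: post)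
  map_smul : ∀ (pre : List M) (c : ℂ) (x : M) (post : List M),
    toFun (pre ++ (c • x) :: post) = c • toFun (pre ++ x :: post)
  B_left : ∀ (b : B) (x : M) (post : List M),
    toFun ((ι b * x) :: post) = b * toFun (x :: post)
  B_right : ∀ (pre : List M) (x : M) (b : B),
    toFun (pre ++ [x * ι b]) = toFun (pre ++ [x]) * b
  B_mid : ∀ (pre : List M) (x : M) (b : B) (y : M) (post : List M),
    toFun (pre ++ (x * ι b) :: y :: post) = toFun (pre ++ x :: (ι b * y) :: post)

/-- Auxiliary operation: multiply the most recently collected argument of an open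
bracket (arguments are stored in reverse order) on the right by `ι b`. -/
def closeArg (ι : B →ₐ[ℂ] M) (b : B) : List M → List M
  | [] => []
  | a :: t => (a * ι b) :: t

/-- One step of the evaluation of the bracketing `π⟨m₁, …, mₙ⟩`.  The state consists of a
stack of argument lists (in reverse order) for the currently open brackets, together with
the product of the values of the already closed outermost brackets.  When `i` is the least
element of its block a new bracket is opened; `m i` is appended to the innermost open
bracket; when `i` is the greatest element of its block the innermost bracket `⟨…⟩` is
evaluated via `κ` and its value is multiplied into the preceding argument of the enclosing
bracket (per the insertion rule), resp. into the outer product (per the disjoint-union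
rule). -/
def bracketingStep (κ : List M → B) (ι : B →ₐ[ℂ] M) {n : ℕ} (P : Finset (Finset (Fin n)))
    (m : Fin n → M) (s : List (List M) × B) (i : Fin n) : List (List M) × B :=
  let st₁ : List (List M) := if IsBlockMin P i then [] :: s.1 else s.1
  let st₂ : List (List M) :=
    match st₁ with
    | [] => []
    | ts :: rest => (m i :: ts) :: rest
  if IsBlockMax P i then
    match st₂ with
    | [] => ([], s.2)
    | ts :: rest =>
        let b := κ ts.reverse
        match rest with
        | [] => ([], s.2 * b)
        | us :: rest' => (closeArg ι b us :: rest', s.2)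
  else (st₂, s.2)

/-- The bracketing `π⟨m₁, …, mₙ⟩ ∈ B` determined by a non-crossing partition `P` and a
multiplicative map `κ`: each block of `P` is interpreted as a bracket `⟨⋯⟩`, inner blocks
being inserted (as elements of `B`) after the preceding element of the enclosing block,
and the values of the outermost brackets being multiplied in order. -/
def bracketing (κ : List M → B) (ι : B →ₐ[ℂ] M) {n : ℕ} (P : Finset (Finset (Fin n)))
    (m : Fin n → M) : B :=
  ((List.finRange n).foldl (bracketingStep κ ι P m) ([], 1)).2

/-- `κ` is the `B`-valued cumulant map `{⋯}_E` of the `B`-probability space `(M, E)`: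
a multiplicative map satisfying the moment–cumulant formula
`E(m₁ ⋯ mₙ) = Σ_{π ∈ NC(n)} π{m₁, …, mₙ}_E`. -/
def IsCumulantMap (ι : B →ₐ[ℂ] M) (E : M →ₗ[ℂ] B) (κ : MultiplicativeMap ι) : Prop :=
  ∀ (n : ℕ) (m : Fin n → M), 0 < n →
    E (((List.finRange n).map m).prod) = ∑ P ∈ NC n, bracketing κ.toFun ι P m

/-- The cumulant series `k_{i₁,…,i_{k+1}}(b₁, …, b_k) = {X_{i₁} b₁, …, X_{i_k} b_k, X_{i_{k+1}}}`
of a family `X₁, …, X_N` with respect to a multiplicative map `κ`. -/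
def cumulantSeries {ι : B →ₐ[ℂ] M} (κ : MultiplicativeMap ι) {N : ℕ} (X : Fin N → M)
    {k : ℕ} (i : Fin (k + 1) → Fin N) (b : Fin k → B) : B :=
  κ.toFun (((List.finRange k).map fun j => X (i j.castSucc) * ι (b j)) ++ [X (i (Fin.last k))])

/-- `E : M → B` is a conditional expectation onto the unital subalgebra `ι(B) ⊆ M`. -/
def IsCondExp (ι : B →ₐ[ℂ] M) (E : M →ₗ[ℂ] B) : Prop :=
  E 1 = 1 ∧ ∀ (b b' : B) (m : M), E (ι b * m * ι b') = b * E m * b'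

/-- The subalgebras `A₁, A₂ ⊆ M` are free with amalgamation (with respect to the
`D`-valued expectation `G`, `D` being a common subalgebra of `A₁` and `A₂`): any
alternating product of `G`-centered elements of `A₁` and `A₂` is `G`-centered. -/
def FreeWithAmalgamation (G : M → B) (A₁ A₂ : Subalgebra ℂ M) : Prop :=
  ∀ l : List (M × Bool), l ≠ [] →
    List.Chain' (fun p q : M × Bool => p.2 ≠ q.2) l →
    (∀ p ∈ l, p.1 ∈ (if p.2 then A₁ else A₂) ∧ G p.1 = 0) →
    G (l.map Prod.fst).prod = 0

end Brack

end OVFree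

open OVFree MeasureTheory

open scoped ComplexOrder

/-- The semicircle law of variance `r ≥ 0`: for `r > 0` the measure on `ℝ` with density
`t ↦ (2πr)⁻¹ √(max(4r − t², 0))` with respect to Lebesgue measure; for `r = 0` the Dirac
mass at `0`. -/
noncomputable def semicircleLaw (r : ℝ) : Measure ℝ :=
  if r = 0 then Measure.dirac 0
  else volume.withDensity fun t =>
    ENNReal.ofReal ((2 * Real.pi * r)⁻¹ * Real.sqrt (max (4 * r - t ^ 2) 0))

/-!
As only the second cumulant `η(b) = {X b, X}` of `X` is nonzero, the moment-cumulant formula reduces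
to the non-crossing pairings. Reading the opening and closing points of the blocks as up and down
steps identifies these with Dyck words, hence with binary trees, and the bracketing of a pairing is
computed along its tree from `η` alone.

If `η(1) = E(X²) = c`, each of the `catalan k` trees with `k` nodes contributes `cᵏ` to `E(X²ᵏ)`,
which gives the moments of the semicircle law of variance `c`. Conversely, traciality turns
`E(X⁴) = η(η(1)) + η(1)²` into `τ(X⁴) = 2 F(E(X²)²)`. For the semicircle law of variance `r` this
number is `2r²` while `F(E(X²)) = r`, so `E(X²)` has variance zero under `F`, and the faithfulness
of `F` makes it a scalar.
-/

section SemicircleMoments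

open Real intervalIntegral

theorem integral_sin_pow_mul_cos_sq_symm (k : ℕ) :
    ∫ x in -(π / 2)..π / 2, sin x ^ k * cos x ^ 2 =
      (∫ x in -(π / 2)..π / 2, sin x ^ k) / (k + 2) := by
  have hsub (x : ℝ) : sin x ^ k * cos x ^ 2 = sin x ^ k - sin x ^ (k + 2) := by
    rw [cos_sq']; ring
  simp_rw [hsub]
  have hint (j : ℕ) : IntervalIntegrable (fun x ↦ sin x ^ j) MeasureTheory.volume
      (-(π / 2)) (π / 2) :=
    Continuous.intervalIntegrable (by fun_prop) _ _
  rw [integral_sub (hint k) (hint (k + 2)), integral_sin_pow]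
  simp only [cos_neg, cos_pi_div_two, mul_zero, sub_zero, zero_div, zero_add]
  field_simp
  ring

theorem sqrt_max_four_mul_sub_sq_sin {r x : ℝ} (hr : 0 ≤ r) (hx : 0 ≤ cos x) :
    √(max (4 * r - (2 * √r * sin x) ^ 2) 0) = 2 * √r * cos x := by
  have hsq : 4 * r - (2 * √r * sin x) ^ 2 = (2 * √r * cos x) ^ 2 := by
    simp only [mul_pow, sq_sqrt hr, cos_sq']; ring
  rw [hsq, max_eq_left (by positivity), sqrt_sq (by positivity)]

theorem integral_semicircleLaw {r : ℝ} (hr : 0 < r) (f : ℝ → ℝ) :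
    ∫ t, f t ∂semicircleLaw r =
      (2 * π * r)⁻¹ * ∫ t in -(2 * √r)..2 * √r, f t * √(max (4 * r - t ^ 2) 0) := by
  have hdensity (t : ℝ) :
      (ENNReal.ofReal ((2 * π * r)⁻¹ * √(max (4 * r - t ^ 2) 0))).toReal • f t =
        (2 * π * r)⁻¹ * (f t * √(max (4 * r - t ^ 2) 0)) := by
    rw [ENNReal.toReal_ofReal (by positivity), smul_eq_mul]; ring
  rw [semicircleLaw, if_neg hr.ne',
    integral_withDensity_eq_integral_toReal_smul (by fun_prop) (by simp)]
  simp_rw [hdensity]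
  rw [MeasureTheory.integral_const_mul, integral_of_le (by linarith [sqrt_nonneg r]),
    setIntegral_eq_integral_of_forall_compl_eq_zero]
  intro t ht
  have houtside : 4 * r ≤ t ^ 2 := by
    have := sq_sqrt hr.le
    rw [Set.mem_Ioc, not_and_or, not_lt, not_le] at ht
    rcases ht with h | h <;> nlinarith [sqrt_nonneg r]
  rw [max_eq_right (by linarith), sqrt_zero, mul_zero]

/- The substitution `t = 2√r sin x`. -/
theorem integral_semicircleLaw_eq_integral_cos_sq {r : ℝ} (hr : 0 ≤ r) {f : ℝ → ℝ}
    (hf : Continuous f) :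
    ∫ t, f t ∂semicircleLaw r =
      2 / π * ∫ x in -(π / 2)..π / 2, f (2 * √r * sin x) * cos x ^ 2 := by
  rcases hr.eq_or_lt with rfl | hr
  · have hcos : ∫ x in -(π / 2)..π / 2, cos x ^ 2 = π / 2 := by simp [integral_cos_sq]
    simp only [semicircleLaw, if_true, MeasureTheory.integral_dirac, sqrt_zero, mul_zero, zero_mul,
      intervalIntegral.integral_const_mul, hcos]
    field_simp
  have hsubst := integral_comp_mul_deriv (a := -(π / 2)) (b := π / 2)
    (f := fun x ↦ 2 * √r * sin x) (f' := fun x ↦ 2 * √r * cos x)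
    (g := fun t ↦ f t * √(max (4 * r - t ^ 2) 0))
    (fun x _ ↦ (hasDerivAt_sin x).const_mul _) (by fun_prop) (by fun_prop)
  simp only [sin_neg, sin_pi_div_two, mul_neg, mul_one] at hsubst
  rw [integral_semicircleLaw hr, ← hsubst, ← intervalIntegral.integral_const_mul,
    ← intervalIntegral.integral_const_mul]
  refine integral_congr fun x hx ↦ ?_
  rw [Set.uIcc_of_le (by linarith [pi_pos])] at hx
  simp only [Function.comp_apply, sqrt_max_four_mul_sub_sq_sin hr.le (cos_nonneg_of_mem_Icc hx)]
  field_simp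
  linear_combination f (2 * √r * sin x) * cos x ^ 2 * sq_sqrt hr.le

theorem integral_pow_semicircleLaw {r : ℝ} (hr : 0 ≤ r) (k : ℕ) :
    ∫ t, t ^ k ∂semicircleLaw r =
      2 / π * (2 * √r) ^ k / (k + 2) * ∫ x in -(π / 2)..π / 2, sin x ^ k := by
  rw [integral_semicircleLaw_eq_integral_cos_sq hr (continuous_pow k)]
  simp_rw [mul_pow _ (sin _), mul_assoc]
  rw [intervalIntegral.integral_const_mul, integral_sin_pow_mul_cos_sq_symm]
  ring

theorem integral_pow_add_two_semicircleLaw {r : ℝ} (hr : 0 ≤ r) (k : ℕ) :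
    ∫ t, t ^ (k + 2) ∂semicircleLaw r =
      4 * r * ((k + 1) / (k + 4)) * ∫ t, t ^ k ∂semicircleLaw r := by
  rw [integral_pow_semicircleLaw hr, integral_pow_semicircleLaw hr, integral_sin_pow, pow_add,
    mul_pow 2 _ 2, sq_sqrt hr]
  simp only [cos_neg, cos_pi_div_two, mul_zero, sub_self, zero_div, zero_add, Nat.cast_add,
    Nat.cast_ofNat]
  field_simp
  ring

theorem add_two_mul_catalan_succ (k : ℕ) :
    (k + 2) * catalan (k + 1) = 2 * (2 * k + 1) * catalan k := by
  have h := Nat.succ_mul_centralBinom_succ k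
  rw [← succ_mul_catalan_eq_centralBinom, ← succ_mul_catalan_eq_centralBinom] at h
  refine Nat.eq_of_mul_eq_mul_left (Nat.add_one_pos k) ?_
  linear_combination h

theorem integral_pow_two_mul_semicircleLaw {r : ℝ} (hr : 0 ≤ r) (k : ℕ) :
    ∫ t, t ^ (2 * k) ∂semicircleLaw r = catalan k * r ^ k := by
  induction k with
  | zero =>
    rw [integral_pow_semicircleLaw hr]
    simp only [mul_zero, pow_zero, mul_one, Nat.cast_zero, zero_add, integral_one, sub_neg_eq_add,
      add_halves, catalan_zero, Nat.cast_one]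
    field_simp
  | succ k ih =>
    have hcatalan : ((k : ℝ) + 2) * catalan (k + 1) = 2 * (2 * k + 1) * catalan k :=
      mod_cast add_two_mul_catalan_succ k
    rw [mul_add_one, integral_pow_add_two_semicircleLaw hr, ih]
    push_cast
    field_simp
    linear_combination -2 * r ^ (k + 1) * hcatalan

theorem integral_pow_two_mul_add_one_semicircleLaw {r : ℝ} (hr : 0 ≤ r) (k : ℕ) :
    ∫ t, t ^ (2 * k + 1) ∂semicircleLaw r = 0 := by
  induction k with
  | zero =>
    rw [integral_pow_semicircleLaw hr]
    simp
  | succ k ih =>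
    rw [mul_add_one, add_right_comm, integral_pow_add_two_semicircleLaw hr, ih, mul_zero]

end SemicircleMoments

namespace OVFree

section DyckPaths

variable {n : ℕ} {h : ℕ → ℕ}

/-- `h 0, …, h n` are the heights of a Dyck path: it has steps `±1`, stays nonnegative (heights are
natural numbers), and starts and ends at `0`. The values of `h` beyond `n` are irrelevant. -/
structure IsDyckPath (n : ℕ) (h : ℕ → ℕ) : Prop where
  zero : h 0 = 0
  last : h n = 0
  step : ∀ k < n, h (k + 1) = h k + 1 ∨ h k = h (k + 1) + 1

/-- The `j`-th step of the path `h` is the first one to return to the height from which the `i`-th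
step went up; steps are numbered from `0`, the `k`-th one leading from `h k` to `h (k + 1)`. -/
def IsArch (h : ℕ → ℕ) (i j : ℕ) : Prop :=
  i < j ∧ h (j + 1) = h i ∧ ∀ k, i < k → k ≤ j → h i < h k

namespace IsArch

variable {i j i' j' : ℕ}

theorem right_unique (hij : IsArch h i j) (hij' : IsArch h i j') : j = j' := by
  obtain ⟨hlt, hret, hgt⟩ := hij
  obtain ⟨hlt', hret', hgt'⟩ := hij'
  rcases lt_trichotomy j j' with hjj | hjj | hjj
  · have := hgt' (j + 1) (by lia) hjj; lia
  · exact hjj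
  · have := hgt (j' + 1) (by lia) hjj; lia

theorem left_unique (hij : IsArch h i j) (hij' : IsArch h i' j) : i = i' := by
  obtain ⟨hlt, hret, hgt⟩ := hij
  obtain ⟨hlt', hret', hgt'⟩ := hij'
  rcases lt_trichotomy i i' with hii | hii | hii
  · have := hgt i' hii hlt'.le; lia
  · exact hii
  · have := hgt' i hii hlt.le; lia

theorem lt_succ_left (hij : IsArch h i j) : h i < h (i + 1) := hij.2.2 _ (by lia) hij.1

theorem succ_lt_right (hij : IsArch h i j) : h (j + 1) < h j := hij.2.1 ▸ hij.2.2 _ hij.1 le_rfl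

theorem not_crossing (hij : IsArch h i j) (hij' : IsArch h i' j') :
    ¬ (i < i' ∧ i' < j ∧ j < j') := by
  rintro ⟨hii, hij'', hjj⟩
  have hlt := hij.2.2 i' hii hij''.le
  have hlt' := hij'.2.2 (j + 1) (by lia) hjj
  have := hij.2.1
  lia

end IsArch

namespace IsDyckPath

theorem exists_isArch_left (hh : IsDyckPath n h) {i : ℕ} (hi : i < n) (hup : h (i + 1) = h i + 1) :
    ∃ j < n, IsArch h i j := by
  have hne : i + 1 ≠ n := by rintro rfl; have := hh.last; lia
  have hlast : i < n - 1 ∧ h (n - 1 + 1) ≤ h i :=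
    ⟨by lia, by rw [Nat.sub_add_cancel (by lia), hh.last]; exact zero_le⟩
  have hex : ∃ j, i < j ∧ h (j + 1) ≤ h i := ⟨_, hlast⟩
  obtain ⟨hij, hret⟩ := Nat.find_spec hex
  have hjn : Nat.find hex ≤ n - 1 := Nat.find_min' hex hlast
  have habove (k : ℕ) (hik : i < k) (hkj : k ≤ Nat.find hex) : h i < h k := by
    obtain rfl | hk := eq_or_ne k (i + 1)
    · lia
    · have := Nat.find_min hex (m := k - 1) (by lia)
      rw [Nat.sub_add_cancel (by lia)] at this
      lia
  refine ⟨Nat.find hex, by lia, hij, ?_, habove⟩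
  have := habove _ hij le_rfl
  have := hh.step (Nat.find hex) (by lia)
  lia

theorem exists_isArch_right (hh : IsDyckPath n h) {j : ℕ} (hj : j < n)
    (hdown : h j = h (j + 1) + 1) : ∃ i, IsArch h i j := by
  obtain ⟨i, hij, hi, habove⟩ :
      ∃ i ≤ j, h i ≤ h (j + 1) ∧ ∀ k, i < k → k ≤ j → h (j + 1) < h k :=
    ⟨Nat.findGreatest (fun i ↦ h i ≤ h (j + 1)) j, Nat.findGreatest_le j,
      Nat.findGreatest_spec (P := fun i ↦ h i ≤ h (j + 1)) zero_le (by simp [hh.zero]),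
      fun k hik hkj ↦
        not_le.mp (Nat.findGreatest_is_greatest (P := fun i ↦ h i ≤ h (j + 1)) hik hkj)⟩
  have hij : i < j := hij.lt_of_ne (by rintro rfl; lia)
  have hret : h (j + 1) = h i := by
    have := habove (i + 1) (by lia) hij
    have := hh.step i (by lia)
    lia
  exact ⟨i, hij, hret, fun k hik hkj ↦ hret ▸ habove k hik hkj⟩

end IsDyckPath

end DyckPaths

section Partitions

variable {n : ℕ} {P : Finset (Finset (Fin n))} {t u : Finset (Fin n)} {i : Fin n} {k : ℕ}

namespace IsPartition

theorem eq_of_mem (hP : IsPartition P) (ht : t ∈ P) (hu : u ∈ P) (hit : i ∈ t) (hiu : i ∈ u) :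
    t = u :=
  (hP.2 i).unique ⟨ht, hit⟩ ⟨hu, hiu⟩

theorem isBlockMin_iff (hP : IsPartition P) (ht : t ∈ P) (hi : i ∈ t) :
    IsBlockMin P i ↔ ∀ j ∈ t, i ≤ j :=
  ⟨fun h ↦ h t ht hi, fun h _ hu hiu ↦ hP.eq_of_mem ht hu hi hiu ▸ h⟩

theorem isBlockMax_iff (hP : IsPartition P) (ht : t ∈ P) (hi : i ∈ t) :
    IsBlockMax P i ↔ ∀ j ∈ t, j ≤ i :=
  ⟨fun h ↦ h t ht hi, fun h _ hu hiu ↦ hP.eq_of_mem ht hu hi hiu ▸ h⟩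

end IsPartition

/-- The blocks of `P` having a point before and a point at or after position `k`. -/
def openBlocks (P : Finset (Finset (Fin n))) (k : ℕ) : Finset (Finset (Fin n)) :=
  P.filter fun t ↦ (∃ a ∈ t, (a : ℕ) < k) ∧ ∃ a ∈ t, k ≤ a

theorem mem_openBlocks :
    t ∈ openBlocks P k ↔ t ∈ P ∧ (∃ a ∈ t, (a : ℕ) < k) ∧ ∃ a ∈ t, k ≤ a :=
  Finset.mem_filter

theorem openBlocks_zero : openBlocks P 0 = ∅ := by
  simp [openBlocks]

theorem openBlocks_of_le (hk : n ≤ k) : openBlocks P k = ∅ := by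
  simp only [openBlocks, Finset.filter_eq_empty_iff]
  rintro t - ⟨-, a, -, hka⟩
  exact absurd a.isLt (by lia)

namespace IsPartition

theorem card_openBlocks_succ (hP : IsPartition P) (i : Fin n) :
    (openBlocks P (i + 1)).card + (if IsBlockMax P i then 1 else 0) =
      (openBlocks P i).card + (if IsBlockMin P i then 1 else 0) := by
  obtain ⟨t, ⟨ht, hit⟩, -⟩ := hP.2 i
  have herase : (openBlocks P (i + 1)).erase t = (openBlocks P i).erase t := by
    ext u
    simp only [Finset.mem_erase, mem_openBlocks, and_congr_right_iff]
    intro hut hu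
    have hne (a : Fin n) (ha : a ∈ u) : (a : ℕ) ≠ i := fun hai ↦
      hut (hP.eq_of_mem hu ht ha (Fin.ext hai ▸ hit))
    have hlt (a : Fin n) (ha : a ∈ u) : (a : ℕ) < i + 1 ↔ (a : ℕ) < i := by have := hne a ha; lia
    have hle (a : Fin n) (ha : a ∈ u) : (i + 1 : ℕ) ≤ a ↔ (i : ℕ) ≤ a := by have := hne a ha; lia
    simp only [← Finset.mem_coe] at hlt hle ⊢
    exact and_congr (exists_congr fun a ↦ and_congr_right (hlt a))
      (exists_congr fun a ↦ and_congr_right (hle a))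
  have hmax : t ∈ openBlocks P (i + 1) ↔ ¬ IsBlockMax P i := by
    simp only [mem_openBlocks, ht, true_and, hP.isBlockMax_iff ht hit, not_forall, not_le,
      exists_prop, Fin.lt_def, Nat.succ_le_iff]
    exact and_iff_right ⟨i, hit, by lia⟩
  have hmin : t ∈ openBlocks P i ↔ ¬ IsBlockMin P i := by
    simp only [mem_openBlocks, ht, true_and, hP.isBlockMin_iff ht hit, not_forall, not_le,
      exists_prop, Fin.lt_def]
    exact and_iff_left ⟨i, hit, le_rfl⟩
  have hcard := congrArg Finset.card herase
  rw [Finset.card_erase_eq_ite, Finset.card_erase_eq_ite, if_congr hmax rfl rfl,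
    if_congr hmin rfl rfl] at hcard
  have hpos := fun hi ↦ Finset.card_pos.mpr ⟨t, hmax.mpr hi⟩
  have hpos' := fun hi ↦ Finset.card_pos.mpr ⟨t, hmin.mpr hi⟩
  split_ifs at hcard ⊢ <;> grind

theorem openBlocks_nonempty (hP : IsPartition P) (hi : ¬ IsBlockMin P i) :
    (openBlocks P i).Nonempty := by
  obtain ⟨t, ⟨ht, hit⟩, -⟩ := hP.2 i
  rw [hP.isBlockMin_iff ht hit] at hi
  push Not at hi
  obtain ⟨a, ha, hai⟩ := hi
  exact ⟨t, mem_openBlocks.mpr ⟨ht, ⟨a, ha, hai⟩, i, hit, le_rfl⟩⟩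

end IsPartition

theorem mem_NC : P ∈ NC n ↔ IsPartition P ∧ IsNonCrossing P := by
  simp [NC]

section NonCrossing

variable {j : Fin n}

theorem exists_lt_of_mem_openBlocks (hP : P ∈ NC n) (ht : t ∈ P) (hit : i ∈ t) (hjt : j ∈ t)
    (hmin : ∀ a ∈ t, i ≤ a) (hu : u ∈ openBlocks P i) : ∃ a ∈ u, j < a := by
  obtain ⟨hP, hcross⟩ := mem_NC.mp hP
  obtain ⟨huP, ⟨a, ha, hai⟩, b, hb, hib⟩ := mem_openBlocks.mp hu
  have hut : u ≠ t := by rintro rfl; exact hai.not_ge (hmin a ha)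
  have hbi : b ≠ i := by rintro rfl; exact hut (hP.eq_of_mem huP ht hb hit)
  have hbj : b ≠ j := by rintro rfl; exact hut (hP.eq_of_mem huP ht hb hjt)
  refine ⟨b, hb, lt_of_not_ge fun hbj' ↦ hut ?_⟩
  exact hcross a i b j hai (lt_of_le_of_ne hib hbi.symm) (lt_of_le_of_ne hbj' hbj) u huP t ht
    ha hb hit hjt

theorem exists_lt_of_mem_openBlocks_succ (hP : P ∈ NC n) (ht : t ∈ P) (hit : i ∈ t) (hjt : j ∈ t)
    (hmax : ∀ a ∈ t, a ≤ j) (hu : u ∈ openBlocks P (j + 1)) : ∃ a ∈ u, a < i := by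
  obtain ⟨hP, hcross⟩ := mem_NC.mp hP
  obtain ⟨huP, ⟨a, ha, haj⟩, b, hb, hjb⟩ := mem_openBlocks.mp hu
  have hut : u ≠ t := by rintro rfl; exact absurd (hmax b hb) (by lia)
  have hai : a ≠ i := by rintro rfl; exact hut (hP.eq_of_mem huP ht ha hit)
  have haj' : a ≠ j := by rintro rfl; exact hut (hP.eq_of_mem huP ht ha hjt)
  refine ⟨a, ha, lt_of_not_ge fun hia ↦ hut ?_⟩
  exact (hcross i a j b (by lia) (by lia) (by lia) t ht u huP hit hjt ha hb).symm

theorem isArch_card_openBlocks (hP : P ∈ NC n) (ht : t ∈ P) (hit : i ∈ t) (hjt : j ∈ t)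
    (hmin : ∀ a ∈ t, i ≤ a) (hmax : ∀ a ∈ t, a ≤ j) (hij : i < j) :
    IsArch (fun k ↦ (openBlocks P k).card) i j := by
  refine ⟨hij, congrArg Finset.card (Finset.Subset.antisymm (fun u hu ↦ ?_) fun u hu ↦ ?_),
    fun k hik hkj ↦ Finset.card_lt_card ((Finset.ssubset_iff_of_subset fun u hu ↦ ?_).mpr ?_)⟩
  · obtain ⟨a, ha, hai⟩ := exists_lt_of_mem_openBlocks_succ hP ht hit hjt hmax hu
    obtain ⟨hu, -, b, hb, hjb⟩ := mem_openBlocks.mp hu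
    exact mem_openBlocks.mpr ⟨hu, ⟨a, ha, hai⟩, b, hb, by lia⟩
  · obtain ⟨b, hb, hjb⟩ := exists_lt_of_mem_openBlocks hP ht hit hjt hmin hu
    obtain ⟨hu, ⟨a, ha, hai⟩, -⟩ := mem_openBlocks.mp hu
    exact mem_openBlocks.mpr ⟨hu, ⟨a, ha, by lia⟩, b, hb, hjb⟩
  · obtain ⟨b, hb, hjb⟩ := exists_lt_of_mem_openBlocks hP ht hit hjt hmin hu
    obtain ⟨hu, ⟨a, ha, hai⟩, -⟩ := mem_openBlocks.mp hu
    exact mem_openBlocks.mpr ⟨hu, ⟨a, ha, by lia⟩, b, hb, by lia⟩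
  · refine ⟨t, mem_openBlocks.mpr ⟨ht, ⟨i, hit, hik⟩, j, hjt, hkj⟩, fun hti ↦ ?_⟩
    obtain ⟨-, ⟨a, ha, hai⟩, -⟩ := mem_openBlocks.mp hti
    exact hai.not_ge (hmin a ha)

end NonCrossing

end Partitions

section Pairings

variable {n : ℕ} {P : Finset (Finset (Fin n))} {h : ℕ → ℕ}

/-- The pairings, i.e. the partitions all of whose blocks have exactly two points: a singleton has a
point that is both least and greatest, a block of three or more a point that is neither. -/
def IsPairing (P : Finset (Finset (Fin n))) : Prop :=
  ∀ i, IsBlockMax P i ↔ ¬ IsBlockMin P i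

/-- The non-crossing pairings of `n` points. -/
def NCPairing (n : ℕ) : Finset (Finset (Finset (Fin n))) :=
  (NC n).filter IsPairing

theorem mem_NCPairing : P ∈ NCPairing n ↔ P ∈ NC n ∧ IsPairing P :=
  Finset.mem_filter

/-- The pairing of the `n` steps of the Dyck path `h` whose blocks are the ends of its arches. -/
def archPairing (h : ℕ → ℕ) (n : ℕ) : Finset (Finset (Fin n)) :=
  Finset.univ.filter fun t ↦ ∃ i j : Fin n, IsArch h i j ∧ t = {i, j}

theorem mem_archPairing {t : Finset (Fin n)} :
    t ∈ archPairing h n ↔ ∃ i j : Fin n, IsArch h i j ∧ t = {i, j} := by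
  simp [archPairing]

namespace IsDyckPath

theorem isPartition_archPairing (hh : IsDyckPath n h) : IsPartition (archPairing h n) := by
  refine ⟨fun t ht ↦ ?_, fun i ↦ existsUnique_of_exists_of_unique ?_ ?_⟩
  · obtain ⟨i, j, -, rfl⟩ := mem_archPairing.mp ht
    exact Finset.insert_nonempty _ _
  · rcases hh.step i i.isLt with hi | hi
    · obtain ⟨j, hj, hij⟩ := hh.exists_isArch_left i.isLt hi
      exact ⟨{i, ⟨j, hj⟩}, mem_archPairing.mpr ⟨i, ⟨j, hj⟩, hij, rfl⟩, by simp⟩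
    · obtain ⟨j, hji⟩ := hh.exists_isArch_right i.isLt hi
      have hj : j < n := hji.1.trans i.isLt
      exact ⟨{⟨j, hj⟩, i}, mem_archPairing.mpr ⟨⟨j, hj⟩, i, hji, rfl⟩, by simp⟩
  · rintro t u ⟨ht, hit⟩ ⟨hu, hiu⟩
    obtain ⟨a, b, hab, rfl⟩ := mem_archPairing.mp ht
    obtain ⟨c, d, hcd, rfl⟩ := mem_archPairing.mp hu
    simp only [Finset.mem_insert, Finset.mem_singleton] at hit hiu
    rcases hit with rfl | rfl <;> rcases hiu with rfl | rfl
    · rw [Fin.ext (hab.right_unique hcd)]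
    · exact absurd hab.lt_succ_left hcd.succ_lt_right.not_gt
    · exact absurd hcd.lt_succ_left hab.succ_lt_right.not_gt
    · rw [Fin.ext (hab.left_unique hcd)]

theorem archPairing_mem_NC (hh : IsDyckPath n h) : archPairing h n ∈ NC n := by
  refine mem_NC.mpr ⟨hh.isPartition_archPairing, ?_⟩
  rintro a b c d hab hbc hcd t ht u hu hat hct hbu hdu
  obtain ⟨i, j, hij, rfl⟩ := mem_archPairing.mp ht
  obtain ⟨i', j', hij', rfl⟩ := mem_archPairing.mp hu
  have hcross := hij.not_crossing hij'
  have := hij.1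
  have := hij'.1
  simp only [Finset.mem_insert, Finset.mem_singleton] at hat hct hbu hdu
  lia

theorem isBlockMin_archPairing (hh : IsDyckPath n h) (i : Fin n) :
    IsBlockMin (archPairing h n) i ↔ h (i + 1) = h i + 1 := by
  obtain ⟨t, ⟨ht, hit⟩, -⟩ := hh.isPartition_archPairing.2 i
  rw [hh.isPartition_archPairing.isBlockMin_iff ht hit]
  obtain ⟨a, b, hab, rfl⟩ := mem_archPairing.mp ht
  have hlt := hab.1
  have hup := hab.lt_succ_left
  have hdown := hab.succ_lt_right
  have hstep := hh.step i i.isLt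
  simp only [Finset.mem_insert, Finset.mem_singleton, forall_eq_or_imp, forall_eq] at hit ⊢
  rcases hit with rfl | rfl <;> lia

theorem isBlockMax_archPairing (hh : IsDyckPath n h) (i : Fin n) :
    IsBlockMax (archPairing h n) i ↔ h i = h (i + 1) + 1 := by
  obtain ⟨t, ⟨ht, hit⟩, -⟩ := hh.isPartition_archPairing.2 i
  rw [hh.isPartition_archPairing.isBlockMax_iff ht hit]
  obtain ⟨a, b, hab, rfl⟩ := mem_archPairing.mp ht
  have hlt := hab.1
  have hup := hab.lt_succ_left
  have hdown := hab.succ_lt_right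
  have hstep := hh.step i i.isLt
  simp only [Finset.mem_insert, Finset.mem_singleton, forall_eq_or_imp, forall_eq] at hit ⊢
  rcases hit with rfl | rfl <;> lia

theorem archPairing_mem_NCPairing (hh : IsDyckPath n h) : archPairing h n ∈ NCPairing n := by
  refine mem_NCPairing.mpr ⟨hh.archPairing_mem_NC, fun i ↦ ?_⟩
  have := hh.step i i.isLt
  rw [hh.isBlockMax_archPairing, hh.isBlockMin_archPairing]
  lia

end IsDyckPath

theorem exists_isArch_of_mem (hP : P ∈ NCPairing n) {t : Finset (Fin n)} (ht : t ∈ P) :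
    ∃ i j : Fin n, IsArch (fun k ↦ (openBlocks P k).card) i j ∧ t = {i, j} := by
  obtain ⟨hP, hpair⟩ := mem_NCPairing.mp hP
  have hPart := (mem_NC.mp hP).1
  have hne := hPart.1 t ht
  obtain ⟨i, hit, hmin⟩ : ∃ i ∈ t, ∀ a ∈ t, i ≤ a :=
    ⟨t.min' hne, t.min'_mem hne, fun a ↦ t.min'_le a⟩
  obtain ⟨j, hjt, hmax⟩ : ∃ j ∈ t, ∀ a ∈ t, a ≤ j :=
    ⟨t.max' hne, t.max'_mem hne, fun a ↦ t.le_max' a⟩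
  have hij : i < j := (hmin j hjt).lt_of_ne <| by
    rintro rfl
    exact (hpair i).mp ((hPart.isBlockMax_iff ht hit).mpr hmax)
      ((hPart.isBlockMin_iff ht hit).mpr hmin)
  refine ⟨i, j, isArch_card_openBlocks hP ht hit hjt hmin hmax hij,
    Finset.Subset.antisymm (fun a ha ↦ ?_) (by simp [Finset.insert_subset_iff, hit, hjt])⟩
  have hpair_a := hpair a
  rw [hPart.isBlockMax_iff ht ha, hPart.isBlockMin_iff ht ha] at hpair_a
  rw [Finset.mem_insert, Finset.mem_singleton]
  by_cases h : ∀ b ∈ t, a ≤ b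
  · exact .inl ((h i hit).antisymm (hmin a ha))
  · exact .inr ((hmax a ha).antisymm (hpair_a.mpr h j hjt))

theorem archPairing_card_openBlocks (hP : P ∈ NCPairing n) :
    archPairing (fun k ↦ (openBlocks P k).card) n = P := by
  refine Finset.Subset.antisymm (fun t ht ↦ ?_)
    fun t ht ↦ mem_archPairing.mpr (exists_isArch_of_mem hP ht)
  obtain ⟨i, j, hij, rfl⟩ := mem_archPairing.mp ht
  obtain ⟨t, ⟨ht, hit⟩, -⟩ := (mem_NC.mp (mem_NCPairing.mp hP).1).1.2 i
  obtain ⟨a, b, hab, rfl⟩ := exists_isArch_of_mem hP ht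
  obtain rfl | rfl : i = a ∨ i = b := by simpa using hit
  · rwa [Fin.ext (hij.right_unique hab)]
  · exact absurd hij.lt_succ_left hab.succ_lt_right.not_gt

end Pairings

section DyckWords

open DyckStep BinaryTree

/-- The height of the word `l` after `k` letters; as subtraction truncates, this is meaningful only
for words like those of `DyckWord`, all of whose prefixes have at least as many `U`s as `D`s. -/
def height (l : List DyckStep) (k : ℕ) : ℕ :=
  (l.take k).count U - (l.take k).count D

theorem count_U_take (p : DyckWord) (k : ℕ) :
    (p.toList.take k).count U = (p.toList.take k).count D + height p.toList k :=
  (Nat.add_sub_cancel' (p.count_D_le_count_U k)).symm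

theorem height_succ (p : DyckWord) {k : ℕ} (hk : k < p.toList.length) :
    height p.toList (k + 1) + (if p.toList[k] = D then 1 else 0) =
      height p.toList k + (if p.toList[k] = U then 1 else 0) := by
  have hcount := count_U_take p (k + 1)
  rw [List.take_succ_eq_append_getElem hk, List.count_append, List.count_append,
    count_U_take] at hcount
  rcases hletter : p.toList[k] with _ | _ <;> grind

theorem isDyckPath_height (p : DyckWord) : IsDyckPath p.toList.length (height p.toList) where
  zero := by simp [height]
  last := by simp [height, p.count_U_eq_count_D]
  step k hk := by
    have := height_succ p hk
    rcases hletter : p.toList[k] with _ | _ <;> grind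

theorem height_succ_eq_add_one_iff (p : DyckWord) {k : ℕ} (hk : k < p.toList.length) :
    height p.toList (k + 1) = height p.toList k + 1 ↔ p.toList[k] = U := by
  have := height_succ p hk
  rcases hletter : p.toList[k] with _ | _ <;> grind

variable {n : ℕ} {P : Finset (Finset (Fin n))}

/-- The word with a `U` for each point that opens a block of `P` and a `D` for each other point. -/
def pairingWord (P : Finset (Finset (Fin n))) : List DyckStep :=
  List.ofFn fun i ↦ if IsBlockMin P i then U else D

theorem length_pairingWord : (pairingWord P).length = n :=
  List.length_ofFn

theorem count_U_take_pairingWord (hP : P ∈ NCPairing n) (k : ℕ) :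
    ((pairingWord P).take k).count U =
      ((pairingWord P).take k).count D + (openBlocks P k).card := by
  induction k with
  | zero => simp [openBlocks_zero]
  | succ k ih =>
    rcases lt_or_ge k n with hk | hk
    · obtain ⟨hP, hpair⟩ := mem_NCPairing.mp hP
      have hopen := (mem_NC.mp hP).1.card_openBlocks_succ ⟨k, hk⟩
      rw [if_congr (hpair _) rfl rfl] at hopen
      rw [List.take_succ_eq_append_getElem (by rwa [length_pairingWord]), List.count_append,
        List.count_append, ih]
      by_cases hmin : IsBlockMin P ⟨k, hk⟩ <;> grind [pairingWord]
    · rw [List.take_of_length_le (by rw [length_pairingWord]; lia), openBlocks_of_le (by lia)]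
      rwa [List.take_of_length_le (by rwa [length_pairingWord]), openBlocks_of_le hk] at ih

theorem height_pairingWord (hP : P ∈ NCPairing n) :
    height (pairingWord P) = fun k ↦ (openBlocks P k).card :=
  funext fun k ↦ by rw [height, count_U_take_pairingWord hP, Nat.add_sub_cancel_left]

/-- The word of a non-crossing pairing as a Dyck word. -/
def pairingDyckWord (hP : P ∈ NCPairing n) : DyckWord where
  toList := pairingWord P
  count_U_eq_count_D := by
    have hcount := count_U_take_pairingWord hP n
    rwa [openBlocks_of_le le_rfl, List.take_of_length_le length_pairingWord.le] at hcount
  count_D_le_count_U k := by simp [count_U_take_pairingWord hP k]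

theorem two_mul_semilength_pairingDyckWord (hP : P ∈ NCPairing n) :
    2 * (pairingDyckWord hP).semilength = n :=
  DyckWord.two_mul_semilength_eq_length.trans length_pairingWord

theorem pairingWord_archPairing_height (p : DyckWord) (hn : p.toList.length = n) :
    pairingWord (archPairing (height p.toList) n) = p.toList := by
  subst hn
  refine List.ext_getElem length_pairingWord fun k _ hk ↦ ?_
  simp only [pairingWord, List.getElem_ofFn]
  rw [if_congr ((isDyckPath_height p).isBlockMin_archPairing ⟨k, hk⟩) rfl rfl,
    if_congr (height_succ_eq_add_one_iff p hk) rfl rfl]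
  rcases p.toList[k] with _ | _ <;> rfl

theorem NCPairing_two_mul_add_one (k : ℕ) : NCPairing (2 * k + 1) = ∅ :=
  Finset.eq_empty_of_forall_notMem fun P hP ↦ by
    have := two_mul_semilength_pairingDyckWord hP
    lia

theorem length_toList_ofTree {t : BinaryTree Unit} {k : ℕ} (ht : t ∈ treesOfNumNodesEq k) :
    (DyckWord.ofTree t).toList.length = 2 * k := by
  rw [← DyckWord.two_mul_semilength_eq_length, ← DyckWord.numNodes_toTree, DyckWord.toTree_ofTree,
    mem_treesOfNumNodesEq.mp ht]

theorem sum_NCPairing_two_mul {A : Type*} [AddCommMonoid A] (k : ℕ) (f : List DyckStep → A) :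
    ∑ P ∈ NCPairing (2 * k), f (pairingWord P) =
      ∑ t ∈ treesOfNumNodesEq k, f (DyckWord.ofTree t).toList := by
  have hmem (t) (ht : t ∈ treesOfNumNodesEq k) :
      archPairing (height (DyckWord.ofTree t).toList) (2 * k) ∈ NCPairing (2 * k) :=
    (length_toList_ofTree ht ▸ isDyckPath_height (DyckWord.ofTree t)).archPairing_mem_NCPairing
  refine Finset.sum_bij' (fun P hP ↦ (pairingDyckWord hP).toTree)
    (fun t _ ↦ archPairing (height (DyckWord.ofTree t).toList) (2 * k))
    (fun P hP ↦ ?_) hmem (fun P hP ↦ ?_) (fun t ht ↦ ?_) fun P hP ↦ ?_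
  · rw [mem_treesOfNumNodesEq, DyckWord.numNodes_toTree]
    have := two_mul_semilength_pairingDyckWord hP
    lia
  · rw [DyckWord.ofTree_toTree]
    exact (congrArg (archPairing · (2 * k)) (height_pairingWord hP)).trans
      (archPairing_card_openBlocks hP)
  · have hword : pairingDyckWord (hmem t ht) = DyckWord.ofTree t :=
      DyckWord.ext (pairingWord_archPairing_height _ (length_toList_ofTree ht))
    exact (congrArg DyckWord.toTree hword).trans (DyckWord.toTree_ofTree t)
  · rw [DyckWord.ofTree_toTree]
    rfl

end DyckWords

section Bracketings

variable {B M : Type*}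

/-- The part of `bracketingStep` that collects the argument `x` into the stack of open brackets,
opening a new bracket for it first if `isMin` holds. -/
def appendArg (isMin : Prop) (x : M) (st : List (List M)) : List (List M) :=
  if isMin then [x] :: st else
    match st with
    | [] => []
    | ts :: rest => (x :: ts) :: rest

theorem length_appendArg (isMin : Prop) (x : M) {st : List (List M)} (hst : isMin ∨ st ≠ []) :
    (appendArg isMin x st).length = st.length + if isMin then 1 else 0 := by
  by_cases hmin : isMin <;> rcases st with _ | _ <;> simp_all [appendArg]

/-- A state of the evaluation of a bracketing that can only lead to the value `0` when `κ` is
semicircular: the outer product is `0`, or some open bracket has an argument `0`, or it has two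
arguments and its last one is still to come. -/
def IsDoomed [Zero B] [Zero M] (s : List (List M) × B) : Prop :=
  s.2 = 0 ∨ ∃ ts ∈ s.1, 0 ∈ ts ∨ 2 ≤ ts.length

theorem isDoomed_cons [Zero B] [Zero M] {ts : List M} {rest : List (List M)} {v : B} :
    IsDoomed (ts :: rest, v) ↔ (0 ∈ ts ∨ 2 ≤ ts.length) ∨ IsDoomed (rest, v) := by
  simp [IsDoomed, or_left_comm]

variable [Ring B] [Algebra ℂ B] [Ring M] [Algebra ℂ M] {ι : B →ₐ[ℂ] M}
  {n : ℕ} {P : Finset (Finset (Fin n))}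

/-- Multiply the value `b` of a closed bracket into the preceding argument of the innermost open
bracket, or into the outer product if no bracket is open. -/
def insertValue (ι : B →ₐ[ℂ] M) (b : B) : List (List M) × B → List (List M) × B
  | ([], v) => ([], v * b)
  | (us :: rest, v) => (closeArg ι b us :: rest, v)

/-- The part of `bracketingStep` that evaluates the innermost open bracket. -/
def closeBracket (κ : List M → B) (ι : B →ₐ[ℂ] M) : List (List M) × B → List (List M) × B
  | ([], v) => ([], v)
  | (ts :: rest, v) => insertValue ι (κ ts.reverse) (rest, v)

theorem bracketingStep_eq (κ : List M → B) (m : Fin n → M) (s : List (List M) × B) (i : Fin n) :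
    bracketingStep κ ι P m s i =
      if IsBlockMax P i then closeBracket κ ι (appendArg (IsBlockMin P i) (m i) s.1, s.2)
      else (appendArg (IsBlockMin P i) (m i) s.1, s.2) := by
  obtain ⟨_ | ⟨ts, _ | ⟨us, rest⟩⟩, v⟩ := s <;>
    by_cases hmin : IsBlockMin P i <;> by_cases hmax : IsBlockMax P i <;>
      simp [bracketingStep, appendArg, closeBracket, insertValue, hmin, hmax]

/-- The state of the evaluation of `bracketing κ ι P m` after the first `k` points. -/
def bracketingState (κ : List M → B) (ι : B →ₐ[ℂ] M) (P : Finset (Finset (Fin n)))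
    (m : Fin n → M) (k : ℕ) : List (List M) × B :=
  ((List.finRange n).take k).foldl (bracketingStep κ ι P m) ([], 1)

theorem bracketingState_succ (κ : List M → B) (m : Fin n → M) (i : Fin n) :
    bracketingState κ ι P m (i + 1) =
      bracketingStep κ ι P m (bracketingState κ ι P m i) i := by
  simp [bracketingState, List.take_succ_eq_append_getElem (l := List.finRange n) (i := i)
    (by simp)]

theorem bracketingState_of_le (κ : List M → B) (m : Fin n → M) {k : ℕ} (hk : n ≤ k) :
    (bracketingState κ ι P m k).2 = bracketing κ ι P m := by
  rw [bracketingState, List.take_of_length_le (by simpa), bracketing]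

theorem length_closeBracket (κ : List M → B) (s : List (List M) × B) :
    (closeBracket κ ι s).1.length = s.1.length - 1 := by
  obtain ⟨_ | ⟨ts, _ | ⟨us, rest⟩⟩, v⟩ := s <;> simp [closeBracket, insertValue]

theorem length_bracketingState (hP : IsPartition P) (κ : List M → B) (m : Fin n → M) {k : ℕ}
    (hk : k ≤ n) : (bracketingState κ ι P m k).1.length = (openBlocks P k).card := by
  induction k with
  | zero => simp [bracketingState, openBlocks_zero]
  | succ k ih =>
    set i : Fin n := ⟨k, hk⟩
    specialize ih (by lia)
    have hne : IsBlockMin P i ∨ (bracketingState κ ι P m i).1 ≠ [] := by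
      refine or_iff_not_imp_left.mpr fun hi ↦ List.ne_nil_of_length_pos ?_
      rw [ih]
      exact Finset.card_pos.mpr (hP.openBlocks_nonempty hi)
    have hcard := hP.card_openBlocks_succ i
    rw [bracketingState_succ κ m i, bracketingStep_eq]
    split_ifs with hmax <;> simp only [hmax, if_true, if_false, i] at hcard <;>
      simp only [length_closeBracket, length_appendArg _ _ hne, ih, i] <;> lia

end Bracketings

section SemicircularCumulants

variable {B M : Type*} [Ring B] [Algebra ℂ B] [Ring M] [Algebra ℂ M] {ι : B →ₐ[ℂ] M}
  {κ : MultiplicativeMap ι} {X : M} {n : ℕ} {P : Finset (Finset (Fin n))}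

/-- The cumulant series `k_p(b₁, …, b_{p-1}) = {X b₁, …, X b_{p-1}, X}` of `X` with respect to the
cumulant map `κ` vanishes for all `p ≠ 2`; here `b` has `p - 1` entries. -/
def IsSemicircular (κ : MultiplicativeMap ι) (X : M) : Prop :=
  ∀ p : ℕ, p ≠ 1 → ∀ b : Fin p → B,
    κ.toFun (((List.finRange p).map fun j ↦ X * ι (b j)) ++ [X]) = 0

theorem MultiplicativeMap.apply_eq_zero_of_mem (κ : MultiplicativeMap ι) {l : List M}
    (hl : 0 ∈ l) : κ.toFun l = 0 := by
  obtain ⟨pre, post, rfl⟩ := List.append_of_mem hl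
  simpa using κ.map_smul pre 0 0 post

theorem IsSemicircular.apply_eq_zero (hX : IsSemicircular κ X) {l : List M} (hne : l ≠ [])
    (hmem : ∀ x ∈ l, x ∈ Set.range (X * ι ·)) (hlen : l.length ≠ 2) : κ.toFun l = 0 := by
  obtain ⟨bs, rfl⟩ : l ∈ Set.range (List.map (X * ι ·)) := by rwa [Set.range_list_map]
  obtain ⟨bs, b, rfl⟩ := (List.eq_nil_or_concat' bs).resolve_left (by simpa using hne)
  have hbs := hX bs.length (by simpa using hlen) bs.get
  rw [← Function.comp_def (X * ι ·) bs.get, ← List.map_map, ← List.ofFn_eq_map,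
    List.ofFn_get] at hbs
  rw [List.map_append, List.map_singleton, κ.B_right, hbs, zero_mul]

/-- Every open bracket of the stack `st` has received an argument, and all arguments lie in
`X B`. -/
def IsStackOver (ι : B →ₐ[ℂ] M) (X : M) (st : List (List M)) : Prop :=
  ∀ ts ∈ st, ts ≠ [] ∧ ∀ x ∈ ts, x ∈ Set.range (X * ι ·)

theorem IsStackOver.appendArg {st : List (List M)} (hst : IsStackOver ι X st) (isMin : Prop)
    {x : M} (hx : x ∈ Set.range (X * ι ·)) : IsStackOver ι X (appendArg isMin x st) := by
  by_cases hmin : isMin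
  · simp only [OVFree.appendArg, if_pos hmin]
    exact List.forall_mem_cons.mpr ⟨⟨by simp, by simpa using hx⟩, hst⟩
  · simp only [OVFree.appendArg, if_neg hmin]
    rcases st with _ | ⟨ts, rest⟩
    · exact hst
    · obtain ⟨⟨-, hmem⟩, hrest⟩ := List.forall_mem_cons.mp hst
      exact List.forall_mem_cons.mpr ⟨⟨by simp, List.forall_mem_cons.mpr ⟨hx, hmem⟩⟩, hrest⟩

theorem closeArg_mem_range {us : List M} (hus : ∀ x ∈ us, x ∈ Set.range (X * ι ·)) (b : B) :
    ∀ x ∈ closeArg ι b us, x ∈ Set.range (X * ι ·) := by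
  rcases us with _ | ⟨a, us⟩
  · simp [closeArg]
  · obtain ⟨⟨b', hb'⟩, hus⟩ := List.forall_mem_cons.mp hus
    exact List.forall_mem_cons.mpr ⟨⟨b' * b, by simp [← hb', mul_assoc]⟩, hus⟩

theorem closeArg_ne_nil {us : List M} (hus : us ≠ []) (b : B) : closeArg ι b us ≠ [] := by
  cases us <;> simp_all [closeArg]

theorem IsStackOver.closeBracket {s : List (List M) × B} (hs : IsStackOver ι X s.1)
    (κ : List M → B) : IsStackOver ι X (closeBracket κ ι s).1 := by
  obtain ⟨_ | ⟨ts, _ | ⟨us, rest⟩⟩, v⟩ := s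
  · exact hs
  · exact fun _ h ↦ absurd h List.not_mem_nil
  · obtain ⟨-, ⟨hne, hmem⟩, hrest⟩ :=
      (List.forall_mem_cons.mp hs).imp_right List.forall_mem_cons.mp
    exact List.forall_mem_cons.mpr
      ⟨⟨closeArg_ne_nil hne _, closeArg_mem_range hmem _⟩, hrest⟩

theorem IsStackOver.bracketingStep {s : List (List M) × B} (hs : IsStackOver ι X s.1)
    (κ : List M → B) {m : Fin n → M} (i : Fin n) (hm : m i ∈ Set.range (X * ι ·)) :
    IsStackOver ι X (bracketingStep κ ι P m s i).1 := by
  have happend := hs.appendArg (IsBlockMin P i) hm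
  rw [bracketingStep_eq]
  split_ifs
  · exact IsStackOver.closeBracket (s := (_, s.2)) happend κ
  · exact happend

theorem isDoomed_closeBracket_of_apply_eq_zero {κ : List M → B} {ts : List M}
    {rest : List (List M)} (v : B) (hts : κ ts.reverse = 0) (hrest : IsStackOver ι X rest) :
    IsDoomed (closeBracket κ ι (ts :: rest, v)) := by
  rcases rest with _ | ⟨us, rest⟩
  · simp [IsDoomed, closeBracket, insertValue, hts]
  · obtain ⟨a, us, rfl⟩ := List.exists_cons_of_ne_nil (hrest us List.mem_cons_self).1
    simp [IsDoomed, closeBracket, insertValue, closeArg, hts]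

theorem IsDoomed.closeBracket_cons {κ : List M → B} {rest : List (List M)} {v : B}
    (hrest : IsDoomed (rest, v)) (ts : List M) : IsDoomed (closeBracket κ ι (ts :: rest, v)) := by
  rcases rest with _ | ⟨_ | ⟨a, us⟩, rest⟩
  · simp_all [IsDoomed, closeBracket, insertValue]
  · simpa [IsDoomed, closeBracket, insertValue, closeArg] using hrest
  · refine isDoomed_cons.mpr ((isDoomed_cons.mp hrest).imp_left (Or.imp_left fun hzero ↦ ?_))
    rcases List.mem_cons.mp hzero with rfl | hzero
    · exact List.mem_cons.mpr (.inl (zero_mul _).symm)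
    · exact List.mem_cons_of_mem _ hzero

theorem IsSemicircular.apply_reverse_cons_eq_zero (hX : IsSemicircular κ X) {x : M} {ts : List M}
    (hx : x ∈ Set.range (X * ι ·)) (hmem : ∀ y ∈ ts, y ∈ Set.range (X * ι ·))
    (hts : 0 ∈ ts ∨ ts.length ≠ 1) : κ.toFun (x :: ts).reverse = 0 := by
  rcases hts with hzero | hlen
  · exact κ.apply_eq_zero_of_mem (by simp [hzero])
  · refine hX.apply_eq_zero (by simp) (fun y hy ↦ ?_) (by simpa using hlen)
    rcases List.mem_cons.mp (List.mem_reverse.mp hy) with rfl | hy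
    exacts [hx, hmem y hy]

theorem IsSemicircular.isDoomed_bracketingStep (hX : IsSemicircular κ X)
    {s : List (List M) × B} (hs : IsStackOver ι X s.1) (hdoomed : IsDoomed s) {m : Fin n → M}
    (i : Fin n) (hm : m i ∈ Set.range (X * ι ·)) :
    IsDoomed (bracketingStep κ.toFun ι P m s i) := by
  obtain ⟨st, v⟩ := s
  rw [bracketingStep_eq]
  by_cases hmin : IsBlockMin P i
  · simp only [appendArg, if_pos hmin]
    split_ifs
    · exact hdoomed.closeBracket_cons _
    · exact isDoomed_cons.mpr (.inr hdoomed)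
  rcases st with _ | ⟨ts, rest⟩
  · simpa [appendArg, hmin, closeBracket] using hdoomed
  simp only [appendArg, if_neg hmin]
  obtain ⟨⟨-, hmem⟩, hrest⟩ := List.forall_mem_cons.mp hs
  split_ifs
  · rcases isDoomed_cons.mp hdoomed with hts | hrest'
    · exact isDoomed_closeBracket_of_apply_eq_zero v
        (hX.apply_reverse_cons_eq_zero hm hmem (hts.imp_right (by lia))) hrest
    · exact hrest'.closeBracket_cons _
  · exact isDoomed_cons.mpr <| (isDoomed_cons.mp hdoomed).imp_left <|
      Or.imp (List.mem_cons_of_mem _) (·.trans (Nat.le_succ _))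

theorem IsSemicircular.isDoomed_bracketingStep_of_isBlockMax_iff (hX : IsSemicircular κ X)
    {s : List (List M) × B} (hs : IsStackOver ι X s.1) {m : Fin n → M} {i : Fin n}
    (hm : m i ∈ Set.range (X * ι ·)) (hi : IsBlockMax P i ↔ IsBlockMin P i)
    (hne : IsBlockMin P i ∨ s.1 ≠ []) :
    IsDoomed (bracketingStep κ.toFun ι P m s i) := by
  obtain ⟨st, v⟩ := s
  rw [bracketingStep_eq, if_congr hi rfl rfl]
  by_cases hmin : IsBlockMin P i
  · simp only [appendArg, if_pos hmin]
    exact isDoomed_closeBracket_of_apply_eq_zero v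
      (hX.apply_reverse_cons_eq_zero hm (by simp) (by simp)) hs
  · obtain ⟨ts, rest, rfl⟩ := List.exists_cons_of_ne_nil (hne.resolve_left hmin)
    have hts := List.length_pos_of_ne_nil (hs ts List.mem_cons_self).1
    simp only [appendArg, if_neg hmin]
    exact isDoomed_cons.mpr (.inl (.inr (Nat.succ_le_succ hts)))

theorem isStackOver_bracketingState (κ : List M → B) {m : Fin n → M}
    (hm : ∀ i, m i ∈ Set.range (X * ι ·)) {k : ℕ} (hk : k ≤ n) :
    IsStackOver ι X (bracketingState κ ι P m k).1 := by
  induction k with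
  | zero => simp [bracketingState, IsStackOver]
  | succ k ih =>
    rw [bracketingState_succ κ m ⟨k, hk⟩]
    exact (ih (by lia)).bracketingStep κ _ (hm _)

theorem IsSemicircular.bracketing_eq_zero (hX : IsSemicircular κ X) (hP : IsPartition P)
    (hpair : ¬ IsPairing P) {m : Fin n → M} (hm : ∀ i, m i ∈ Set.range (X * ι ·)) :
    bracketing κ.toFun ι P m = 0 := by
  obtain ⟨i, hi⟩ := not_forall.mp hpair
  have hdoomed (k : ℕ) (hik : i < k) (hk : k ≤ n) :
      IsDoomed (bracketingState κ.toFun ι P m k) := by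
    induction k, hik using Nat.le_induction with
    | base =>
      rw [Nat.succ_eq_add_one, bracketingState_succ]
      refine hX.isDoomed_bracketingStep_of_isBlockMax_iff
        (isStackOver_bracketingState _ hm i.isLt.le) (hm i) (by tauto) ?_
      refine or_iff_not_imp_left.mpr fun hmin ↦ List.ne_nil_of_length_pos ?_
      rw [length_bracketingState hP _ _ i.isLt.le]
      exact Finset.card_pos.mpr (hP.openBlocks_nonempty hmin)
    | succ k _ ih =>
      rw [bracketingState_succ _ _ ⟨k, hk⟩]
      exact hX.isDoomed_bracketingStep (isStackOver_bracketingState _ hm (Nat.le_of_lt hk))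
        (ih (by lia)) _ (hm _)
  have hempty : (bracketingState κ.toFun ι P m n).1 = [] := by
    rw [← List.length_eq_zero_iff, length_bracketingState hP _ _ le_rfl, openBlocks_of_le le_rfl,
      Finset.card_empty]
  simpa [IsDoomed, hempty, bracketingState_of_le] using hdoomed n i.isLt le_rfl

end SemicircularCumulants

section SemicircularMoments

open DyckStep BinaryTree

variable {B M : Type*} [Ring B] [Algebra ℂ B] [Ring M] [Algebra ℂ M] {ι : B →ₐ[ℂ] M}
  {κ : MultiplicativeMap ι} {X : M} {n : ℕ} {P : Finset (Finset (Fin n))}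

theorem insertValue_one (s : List (List M) × B) : insertValue ι 1 s = s := by
  obtain ⟨_ | ⟨_ | ⟨a, us⟩, rest⟩, v⟩ := s <;> simp [insertValue, closeArg]

theorem insertValue_insertValue (b b' : B) (s : List (List M) × B) :
    insertValue ι b' (insertValue ι b s) = insertValue ι (b * b') s := by
  obtain ⟨_ | ⟨_ | ⟨a, us⟩, rest⟩, v⟩ := s <;> simp [insertValue, closeArg, mul_assoc]

/-- What `bracketingStep` does at the points of a pairing: a letter `U` opens a bracket with the
given argument, a letter `D` completes the innermost bracket with it. -/
def dyckStep (κ : List M → B) (ι : B →ₐ[ℂ] M) (s : List (List M) × B) :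
    DyckStep × M → List (List M) × B
  | (U, x) => ([x] :: s.1, s.2)
  | (D, x) => closeBracket κ ι (appendArg False x s.1, s.2)

/-- The bracketing of the arguments `m` given by the pairing of the letters of the Dyck word `w`. -/
def wordBracketing (κ : List M → B) (ι : B →ₐ[ℂ] M) (w : List DyckStep) (m : List M) : B :=
  ((w.zip m).foldl (dyckStep κ ι) ([], 1)).2

theorem IsPairing.bracketing_eq (hP : IsPairing P) (κ : List M → B) (m : Fin n → M) :
    bracketing κ ι P m = wordBracketing κ ι (pairingWord P) (List.ofFn m) := by
  rw [wordBracketing, pairingWord, List.ofFn_eq_map, List.ofFn_eq_map, List.zip_map',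
    List.foldl_map, bracketing]
  congr 2
  funext s i
  rw [bracketingStep_eq, if_congr (hP i) rfl rfl]
  by_cases hmin : IsBlockMin P i <;> simp [hmin, dyckStep, appendArg]

theorem IsSemicircular.expect_prod (hX : IsSemicircular κ X) {E : M →ₗ[ℂ] B}
    (hκ : IsCumulantMap ι E κ) (hn : 0 < n) {m : Fin n → M}
    (hm : ∀ i, m i ∈ Set.range (X * ι ·)) :
    E (List.ofFn m).prod =
      ∑ P ∈ NCPairing n, wordBracketing κ.toFun ι (pairingWord P) (List.ofFn m) := by
  rw [List.ofFn_eq_map, hκ n m hn, NCPairing, Finset.sum_filter, ← List.ofFn_eq_map]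
  refine Finset.sum_congr rfl fun P hP ↦ ?_
  split_ifs with hpair
  · exact hpair.bracketing_eq _ _
  · exact hX.bracketing_eq_zero (mem_NC.mp hP).1 hpair hm

theorem IsSemicircular.expect_prod_two_mul (hX : IsSemicircular κ X) {E : M →ₗ[ℂ] B}
    (hκ : IsCumulantMap ι E κ) {k : ℕ} (hk : 0 < k) {m : Fin (2 * k) → M}
    (hm : ∀ i, m i ∈ Set.range (X * ι ·)) :
    E (List.ofFn m).prod = ∑ t ∈ treesOfNumNodesEq k,
      wordBracketing κ.toFun ι (DyckWord.ofTree t).toList (List.ofFn m) := by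
  rw [hX.expect_prod hκ (by lia) hm, sum_NCPairing_two_mul k fun w ↦ wordBracketing _ _ w _]

/-- The second cumulant `η b = {X b, X}` of `X` as a map on `B`. -/
def covariance (κ : MultiplicativeMap ι) (X : M) (b : B) : B :=
  κ.toFun [X * ι b, X]

/-- The bracketing `{⋯}` of copies of `X` given by the non-crossing pairing that corresponds to a
binary tree: the left subtree of a node is the pairing inside the first block, the right subtree the
one after it. -/
def treeBracketing (κ : MultiplicativeMap ι) (X : M) : BinaryTree Unit → B
  | nil => 1
  | node _ l r => covariance κ X (treeBracketing κ X l) * treeBracketing κ X r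

theorem toList_ofTree_node (l r : BinaryTree Unit) :
    (DyckWord.ofTree (node () l r)).toList =
      U :: ((DyckWord.ofTree l).toList ++ D :: (DyckWord.ofTree r).toList) := by
  change ([U] ++ (DyckWord.ofTree l).toList ++ [D]) ++ (DyckWord.ofTree r).toList = _
  simp

theorem foldl_dyckStep_ofTree (κ : MultiplicativeMap ι) (X : M) (t : BinaryTree Unit)
    (s : List (List M) × B) :
    ((DyckWord.ofTree t).toList.map (·, X)).foldl (dyckStep κ.toFun ι) s =
      insertValue ι (treeBracketing κ X t) s := by
  induction t generalizing s with
  | nil => exact (insertValue_one s).symm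
  | node _ l r ihl ihr =>
    rw [toList_ofTree_node, treeBracketing, ← insertValue_insertValue]
    simp only [List.map_cons, List.map_append, List.foldl_cons, List.foldl_append, ihl, ihr]
    simp [dyckStep, insertValue, closeArg, appendArg, closeBracket, covariance]

theorem wordBracketing_ofTree (κ : MultiplicativeMap ι) (X : M) (t : BinaryTree Unit) :
    wordBracketing κ.toFun ι (DyckWord.ofTree t).toList
      (List.replicate (DyckWord.ofTree t).toList.length X) = treeBracketing κ X t := by
  have hzip (w : List DyckStep) : w.zip (List.replicate w.length X) = w.map (·, X) := by
    induction w <;> simp_all [List.replicate_succ]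
  rw [wordBracketing, hzip, foldl_dyckStep_ofTree]
  exact one_mul _

theorem treesOfNumNodesEq_one : treesOfNumNodesEq 1 = {node () nil nil} := by
  rw [treesOfNumNodesEq_succ, Finset.Nat.antidiagonal_zero, Finset.singleton_biUnion,
    treesOfNumNodesEq_zero]
  rfl

theorem treesOfNumNodesEq_two : treesOfNumNodesEq 2 =
    {node () nil (node () nil nil), node () (node () nil nil) nil} := by
  have hanti : Finset.HasAntidiagonal.antidiagonal 1 = {(0, 1), (1, 0)} := rfl
  rw [treesOfNumNodesEq_succ, hanti, Finset.biUnion_insert, Finset.singleton_biUnion,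
    treesOfNumNodesEq_one, treesOfNumNodesEq_zero]
  rfl

namespace IsSemicircular

variable {E : M →ₗ[ℂ] B}

theorem expect_mul_mul (hX : IsSemicircular κ X) (hκ : IsCumulantMap ι E κ) (b : B) :
    E (X * ι b * X) = covariance κ X b := by
  have hmem : ∀ i, ![X * ι b, X] i ∈ Set.range (X * ι ·) :=
    Fin.forall_fin_two.mpr ⟨⟨b, rfl⟩, 1, by simp⟩
  have hprod := hX.expect_prod_two_mul hκ one_pos hmem
  have hnil : (DyckWord.ofTree nil).toList = [] := rfl
  simpa [treesOfNumNodesEq_one, toList_ofTree_node, hnil, wordBracketing, dyckStep, appendArg,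
    closeBracket, insertValue, covariance] using hprod

theorem expect_pow_two_mul (hX : IsSemicircular κ X) (hκ : IsCumulantMap ι E κ) {k : ℕ}
    (hk : 0 < k) : E (X ^ (2 * k)) = ∑ t ∈ treesOfNumNodesEq k, treeBracketing κ X t := by
  have hprod := hX.expect_prod_two_mul hκ hk (m := fun _ ↦ X) fun _ ↦ ⟨1, by simp⟩
  rw [List.ofFn_const, List.prod_replicate] at hprod
  refine hprod.trans (Finset.sum_congr rfl fun t ht ↦ ?_)
  rw [← length_toList_ofTree ht, wordBracketing_ofTree]

theorem expect_pow_two_mul_add_one (hX : IsSemicircular κ X) (hκ : IsCumulantMap ι E κ)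
    (k : ℕ) : E (X ^ (2 * k + 1)) = 0 := by
  have hprod := hX.expect_prod hκ (Nat.succ_pos (2 * k)) (m := fun _ ↦ X) fun _ ↦ ⟨1, by simp⟩
  rwa [List.ofFn_const, List.prod_replicate, NCPairing_two_mul_add_one, Finset.sum_empty] at hprod

theorem expect_sq (hX : IsSemicircular κ X) (hκ : IsCumulantMap ι E κ) :
    E (X ^ 2) = covariance κ X 1 := by
  rw [← hX.expect_mul_mul hκ, map_one, mul_one, sq]

theorem expect_pow_four (hX : IsSemicircular κ X) (hκ : IsCumulantMap ι E κ) :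
    E (X ^ 4) = E (X * ι (E (X ^ 2)) * X) + E (X ^ 2) * E (X ^ 2) := by
  rw [hX.expect_mul_mul hκ, hX.expect_sq hκ, show 4 = 2 * 2 from rfl,
    hX.expect_pow_two_mul hκ two_pos, treesOfNumNodesEq_two, Finset.sum_pair (by simp)]
  simp [treeBracketing, add_comm]

theorem map_expect_pow_four (hX : IsSemicircular κ X) (hκ : IsCumulantMap ι E κ)
    (hE : IsCondExp ι E) {V : Type*} [AddCommGroup V] [Module ℂ V] {F : B →ₗ[ℂ] V}
    (htrace : ∀ x y : M, F (E (x * y)) = F (E (y * x))) :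
    F (E (X ^ 4)) = 2 • F (E (X ^ 2) * E (X ^ 2)) := by
  have hcycle : F (E (X * ι (E (X ^ 2)) * X)) = F (E (X ^ 2) * E (X ^ 2)) := by
    rw [mul_assoc, htrace, mul_assoc, ← sq]
    simpa using congrArg F (hE.2 (E (X ^ 2)) 1 (X ^ 2))
  rw [hX.expect_pow_four hκ, map_add, hcycle, two_nsmul]

end IsSemicircular

theorem covariance_smul (κ : MultiplicativeMap ι) (X : M) (c : ℂ) (b : B) :
    covariance κ X (c • b) = c • covariance κ X b := by
  simpa [covariance] using κ.map_smul [] c (X * ι b) [X]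

theorem treeBracketing_eq_smul_one {c : ℂ} (hc : covariance κ X 1 = c • 1)
    (t : BinaryTree Unit) : treeBracketing κ X t = c ^ t.numNodes • (1 : B) := by
  induction t with
  | nil => simp [treeBracketing]
  | node _ l r ihl ihr =>
    rw [treeBracketing, ihl, ihr, covariance_smul, hc, numNodes]
    simp only [smul_mul_smul_comm, smul_smul, mul_one]
    ring_nf

theorem IsSemicircular.expect_pow_two_mul_of_expect_sq (hX : IsSemicircular κ X)
    {E : M →ₗ[ℂ] B} (hκ : IsCumulantMap ι E κ) {c : ℂ} (hc : E (X ^ 2) = c • 1) {k : ℕ}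
    (hk : 0 < k) : E (X ^ (2 * k)) = (catalan k * c ^ k) • (1 : B) := by
  have hcov : covariance κ X 1 = c • 1 := by rw [← hX.expect_sq hκ, hc]
  calc E (X ^ (2 * k)) = ∑ t ∈ treesOfNumNodesEq k, treeBracketing κ X t :=
        hX.expect_pow_two_mul hκ hk
    _ = ∑ _ ∈ treesOfNumNodesEq k, c ^ k • (1 : B) := Finset.sum_congr rfl fun _ ht ↦ by
        rw [treeBracketing_eq_smul_one hcov, mem_treesOfNumNodesEq.mp ht]
    _ = (catalan k * c ^ k) • (1 : B) := by
        rw [Finset.sum_const, treesOfNumNodesEq_card_eq_catalan, ← Nat.cast_smul_eq_nsmul ℂ,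
          smul_smul]

end SemicircularMoments

end OVFree

section ScalarDistribution

theorem map_nonneg_of_map_star_mul_self_nonneg {A R : Type*} [NonUnitalSemiring A] [StarRing A]
    [PartialOrder A] [StarOrderedRing A] [AddCommMonoid R] [PartialOrder R] [IsOrderedAddMonoid R]
    (f : A →+ R) (hf : ∀ a, 0 ≤ f (star a * a)) {a : A} (ha : 0 ≤ a) : 0 ≤ f a := by
  suffices h : AddSubmonoid.closure (Set.range fun s : A ↦ star s * s) ≤
      (AddSubmonoid.nonneg R).comap f from h (StarOrderedRing.nonneg_iff.mp ha)
  rw [AddSubmonoid.closure_le]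
  rintro _ ⟨a, rfl⟩
  exact hf a

variable {B M : Type*} [Ring B] [Algebra ℂ B] [Ring M] [Algebra ℂ M] {ι : B →ₐ[ℂ] M}
  {E : M →ₗ[ℂ] B} {F : B →ₗ[ℂ] ℂ} {κ : MultiplicativeMap ι} {X : M}

theorem moments_eq_of_expect_sq_eq_smul_one (hF1 : F 1 = 1) (hκ : IsCumulantMap ι E κ)
    (hX : IsSemicircular κ X) {r : ℝ} (hr : 0 ≤ r) (hvar : E (X ^ 2) = (r : ℂ) • 1) {k : ℕ}
    (hk : 1 ≤ k) : F (E (X ^ k)) = ((∫ t, t ^ k ∂semicircleLaw r : ℝ) : ℂ) := by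
  obtain ⟨j, rfl | rfl⟩ := k.even_or_odd'
  · rw [hX.expect_pow_two_mul_of_expect_sq hκ hvar (by lia), map_smul, hF1,
      integral_pow_two_mul_semicircleLaw hr]
    simp
  · rw [hX.expect_pow_two_mul_add_one hκ, map_zero, integral_pow_two_mul_add_one_semicircleLaw hr,
      Complex.ofReal_zero]

variable [StarRing B] [StarModule ℂ B]

theorem eq_smul_one_of_map_mul_self_eq_sq (hF1 : F 1 = 1)
    (hFfaithful : ∀ b : B, F (star b * b) = 0 → b = 0) {a : B} (ha : IsSelfAdjoint a) {r : ℝ}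
    (hmean : F a = r) (hsq : F (a * a) = r ^ 2) : a = (r : ℂ) • 1 := by
  refine sub_eq_zero.mp (hFfaithful _ ?_)
  have hexpand : star (a - (r : ℂ) • 1) * (a - (r : ℂ) • 1) =
      a * a - (2 * r : ℂ) • a + (r ^ 2 : ℂ) • 1 := by
    rw [star_sub, star_smul, star_one, ha.star_eq, Complex.star_def, Complex.conj_ofReal]
    simp only [sub_mul, mul_sub, smul_mul_assoc, mul_smul_comm, one_mul, mul_one]
    module
  rw [hexpand, map_add, map_sub, map_smul, map_smul, hmean, hsq, hF1, smul_eq_mul, smul_eq_mul]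
  ring

theorem expect_sq_eq_smul_one_of_moments (hE : IsCondExp ι E) (hF1 : F 1 = 1)
    (hFfaithful : ∀ b : B, F (star b * b) = 0 → b = 0)
    (htrace : ∀ x y : M, F (E (x * y)) = F (E (y * x))) (hκ : IsCumulantMap ι E κ)
    (hX : IsSemicircular κ X) (hsa : IsSelfAdjoint (E (X ^ 2))) {r : ℝ}
    (hsecond : F (E (X ^ 2)) = r) (hfourth : F (E (X ^ 4)) = 2 * r ^ 2) :
    E (X ^ 2) = (r : ℂ) • 1 := by
  have hsq : F (E (X ^ 2) * E (X ^ 2)) = r ^ 2 := by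
    simpa [hfourth] using (hX.map_expect_pow_four hκ hE htrace).symm
  exact eq_smul_one_of_map_mul_self_eq_sq hF1 hFfaithful hsa hsecond hsq

variable [StarRing M]

theorem semicircular_scalar_distribution_iff_constant_variance_general
    (hE : IsCondExp ι E) (hEstar : ∀ m : M, E (star m) = star (E m)) (hF1 : F 1 = 1)
    (hFfaithful : ∀ b : B, F (star b * b) = 0 → b = 0)
    (htrace : ∀ x y : M, F (E (x * y)) = F (E (y * x)))
    (hτpos : ∀ x : M, 0 ≤ F (E (star x * x))) (hκ : IsCumulantMap ι E κ)
    (hXsa : IsSelfAdjoint X) (hX : IsSemicircular κ X) :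
    (∃ r : ℝ, 0 ≤ r ∧ ∀ k : ℕ, 1 ≤ k →
        F (E (X ^ k)) = ((∫ t, t ^ k ∂semicircleLaw r : ℝ) : ℂ))
      ↔ ∃ c : ℂ, E (X ^ 2) = c • 1 := by
  constructor
  · rintro ⟨r, hr, hmoments⟩
    have hsecond : F (E (X ^ 2)) = r := by
      simpa [integral_pow_two_mul_semicircleLaw hr 1] using hmoments (2 * 1) (by simp)
    have hfourth : F (E (X ^ 4)) = 2 * r ^ 2 := by
      simpa [integral_pow_two_mul_semicircleLaw hr 2, catalan_two] using hmoments (2 * 2) (by simp)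
    have hsa : IsSelfAdjoint (E (X ^ 2)) := by
      rw [isSelfAdjoint_iff, ← hEstar, (hXsa.pow 2).star_eq]
    exact ⟨r, expect_sq_eq_smul_one_of_moments hE hF1 hFfaithful htrace hκ hX hsa hsecond hfourth⟩
  · rintro ⟨c, hc⟩
    have hτX := hτpos X
    rw [hXsa.star_eq, ← sq, hc, map_smul, hF1, smul_eq_mul, mul_one] at hτX
    obtain ⟨r, hr, rfl⟩ := RCLike.nonneg_iff_exists_ofReal.mp hτX
    exact ⟨r, hr, fun k hk ↦ moments_eq_of_expect_sq_eq_smul_one hF1 hκ hX hr hc hk⟩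

end ScalarDistribution

/-- Let `M` and `B` be unital C*-algebras, `ι : B → M` the inclusion of
`B` as a unital C*-subalgebra, `E : M → B` a positive conditional expectation and
`F : B → ℂ` a faithful state such that `τ = F∘E` is a faithful trace on `M`.  Let
`X = X* ∈ M` be `B`-semicircular (its `B`-valued cumulant series, w.r.t. the cumulant map
`κ` of `(M, E)`, vanishes except in order two).  Then the distribution of `X` with respect
to `τ` is a semicircle law — i.e. there is `r ≥ 0` with `τ(Xᵏ) = ∫ tᵏ dν_r(t)` for all
`k ≥ 1` — iff `E(X²) ∈ ℂ·1`. -/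
theorem semicircular_scalar_distribution_iff_constant_variance
    {B M : Type*}
    [NormedRing M] [StarRing M] [CStarRing M] [NormedAlgebra ℂ M] [StarModule ℂ M]
    [CompleteSpace M]
    [NormedRing B] [StarRing B] [CStarRing B] [NormedAlgebra ℂ B] [StarModule ℂ B]
    [CompleteSpace B] [PartialOrder B] [StarOrderedRing B]
    (ι : B →⋆ₐ[ℂ] M) (hι : Function.Injective ι)
    (E : M →ₗ[ℂ] B) (hE : IsCondExp ι.toAlgHom E)
    (hEpos : ∀ m : M, 0 ≤ E (star m * m))
    (hEstar : ∀ m : M, E (star m) = star (E m))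
    (F : B →ₗ[ℂ] ℂ) (hF1 : F 1 = 1)
    (hFpos : ∀ b : B, 0 ≤ F (star b * b))
    (hFfaithful : ∀ b : B, F (star b * b) = 0 → b = 0)
    (htrace : ∀ x y : M, F (E (x * y)) = F (E (y * x)))
    (hτfaithful : ∀ x : M, F (E (star x * x)) = 0 → x = 0)
    (κ : MultiplicativeMap ι.toAlgHom) (hκ : IsCumulantMap ι.toAlgHom E κ)
    (X : M) (hXsa : IsSelfAdjoint X)
    (hXsemicirc : ∀ (p : ℕ), p ≠ 1 → ∀ b : Fin p → B,
      κ.toFun (((List.finRange p).map fun j => X * ι (b j)) ++ [X]) = 0) :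
    (∃ r : ℝ, 0 ≤ r ∧ ∀ k : ℕ, 1 ≤ k →
        F (E (X ^ k)) = ((∫ t, t ^ k ∂(semicircleLaw r) : ℝ) : ℂ))
      ↔ ∃ c : ℂ, E (X ^ 2) = c • 1 := by
  have hτpos (x : M) : 0 ≤ F (E (star x * x)) :=
    map_nonneg_of_map_star_mul_self_nonneg F.toAddMonoidHom hFpos (hEpos x)
  exact semicircular_scalar_distribution_iff_constant_variance_general hE hEstar hF1 hFfaithful
    htrace hτpos hκ hXsa hXsemicirc
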